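/- arXiv:1707.06520 — 2 statements merged into one kernel-verified Lean document; each statement's English description precedes it below -/
import Mathlib

section
/- Let Q be a nonzero element of K with [w+1] ≠ 0, and set κ = [w]/[w+1] and δ = q + q^{−1}. For n ≥ 3 let M be the n×n matrix over K, with rows and columns indexed by 0,…,n−1, defined by: M₀₀ = M₀₁ = M₁₀ = κ; M₀₂ = M₂₀ = 1; M₁₂ = M₂₁ = 1; M_{ii} = δ for 1 ≤ i ≤ n−1; M_{i,i+1} = M_{i+1,i} = 1 for 2 ≤ i ≤ n−2; and all other entries 0 (the Gram matrix M^b_n(−(n−2)) of the blob algebra cell module W_{−(n−2)}(n) with the blob generator normalised to be idempotent). Then det M = [w+2]·[w+2−n]/[w+1]². -/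
/-- The shifted quantum bracket `[w+m] = (Q·q^m - Q⁻¹·q^{-m})/(q - q⁻¹)`,
where `Q` is thought of as `q^w` for a formal exponent `w`. -/
noncomputable def qbr {K : Type*} [Field K] (q Q : K) (m : ℤ) : K :=
  (Q * q ^ m - Q⁻¹ * q ^ (-m)) / (q - q⁻¹)

/-!
In the Gram matrix the rows with index `0` and `1` differ only in column `1`, by `δ - κ`.
Subtracting one from the other and expanding splits off that factor and leaves the tridiagonal
matrix `T` of size `n - 1` with diagonal `κ, δ, …, δ` and ones next to it. The two factors are
`δ - κ = [w+2]/[w+1]` and `det T = [w+2-n]/[w+1]`; the latter because `det T`, in the size of `T`,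
satisfies the recurrence `[w+m-1] = δ [w+m] - [w+m+1]` of the quantum brackets.
-/

section Determinants

variable {R : Type*} [CommRing R] {n : ℕ}

theorem det_eq_mul_det_submatrix_of_row_eq_zero
    (M : Matrix (Fin (n + 1)) (Fin (n + 1)) R) (i j : Fin (n + 1))
    (hrow : ∀ k, k ≠ j → M i k = 0) :
    M.det = (-1) ^ (i + j : ℕ) * M i j * (M.submatrix i.succAbove j.succAbove).det := by
  rw [Matrix.det_succ_row M i]
  refine Fintype.sum_eq_single j fun k hk => ?_
  rw [hrow k hk, mul_zero, zero_mul]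

theorem det_eq_sub_mul_det_submatrix_of_rows_eq
    (M : Matrix (Fin (n + 1)) (Fin (n + 1)) R) {i k : Fin (n + 1)} (hik : i ≠ k)
    (hrows : ∀ j, j ≠ i → M i j = M k j) :
    M.det = (M i i - M k i) * (M.submatrix i.succAbove i.succAbove).det := by
  have hdet : (M.updateRow i (M i + (-1 : R) • M k)).det = M.det :=
    Matrix.det_updateRow_add_smul_self M hik (-1)
  rw [← hdet, det_eq_mul_det_submatrix_of_row_eq_zero _ i i, Matrix.submatrix_updateRow_succAbove,
    Even.neg_one_pow ⟨_, rfl⟩]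
  · simp [sub_eq_add_neg]
  · intro j hj
    simp [hrows j hj]

theorem det_eq_of_last_row_col_eq_zero
    (M : Matrix (Fin (n + 2)) (Fin (n + 2)) R)
    (hrow : ∀ j : Fin n, M (Fin.last _) j.castSucc.castSucc = 0)
    (hcol : ∀ i : Fin n, M i.castSucc.castSucc (Fin.last _) = 0) :
    M.det =
      M (Fin.last _) (Fin.last _) * (M.submatrix Fin.castSucc Fin.castSucc).det -
        M (Fin.last n).castSucc (Fin.last _) * M (Fin.last _) (Fin.last n).castSucc *
          (M.submatrix (Fin.castSucc ∘ Fin.castSucc) (Fin.castSucc ∘ Fin.castSucc)).det := by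
  have hminor : (M.submatrix (Fin.last n).castSucc.succAbove Fin.castSucc).det =
      M (Fin.last _) (Fin.last n).castSucc *
        (M.submatrix (Fin.castSucc ∘ Fin.castSucc) (Fin.castSucc ∘ Fin.castSucc)).det := by
    have hskip : (Fin.last n).castSucc.succAbove ∘ Fin.castSucc =
        Fin.castSucc ∘ Fin.castSucc (n := n) := by
      funext i
      exact Fin.succAbove_castSucc_of_lt _ _ i.castSucc_lt_last
    rw [det_eq_mul_det_submatrix_of_row_eq_zero _ (Fin.last n) (Fin.last n),
      Even.neg_one_pow ⟨_, rfl⟩, one_mul, Matrix.submatrix_submatrix, Fin.succAbove_last, hskip,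
      Matrix.submatrix_apply, Fin.succAbove_castSucc_self, Fin.succ_last]
    intro j hj
    obtain ⟨j, rfl⟩ := Fin.exists_castSucc_eq.mpr hj
    simpa using hrow j
  rw [Matrix.det_succ_column M (Fin.last _), Fin.sum_univ_castSucc, Fin.sum_univ_castSucc,
    Finset.sum_eq_zero fun i _ => by rw [hcol i, mul_zero, zero_mul], Fin.succAbove_last, hminor]
  simp only [Fin.val_castSucc, Fin.val_last, Even.neg_one_pow ⟨n + 1, rfl⟩,
    Odd.neg_one_pow (show Odd (n + (n + 1)) from ⟨n, by ring⟩)]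
  ring

end Determinants

section GramMatrix

variable {R : Type*} [CommRing R]

/-- The Gram matrix `M^b_n(-(n-2))` with the parameters `κ` and `δ` left free. -/
def blobGram (κ δ : R) (n : ℕ) : Matrix (Fin n) (Fin n) R :=
  Matrix.of fun i j =>
    if ((i : ℕ) = 0 ∧ (j : ℕ) = 0) ∨ ((i : ℕ) = 0 ∧ (j : ℕ) = 1) ∨
        ((i : ℕ) = 1 ∧ (j : ℕ) = 0) then κ
    else if ((i : ℕ) = 0 ∧ (j : ℕ) = 2) ∨ ((i : ℕ) = 2 ∧ (j : ℕ) = 0) then 1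
    else if (i : ℕ) = (j : ℕ) then δ
    else if (i : ℕ) + 1 = (j : ℕ) ∨ (j : ℕ) + 1 = (i : ℕ) then 1
    else 0

/-- The tridiagonal matrix with diagonal `κ, δ, …, δ` and ones on the two neighbouring
diagonals; it is what remains of `blobGram κ δ (n + 1)` once row and column `1` are deleted. -/
def cornerTridiagonal (κ δ : R) (n : ℕ) : Matrix (Fin n) (Fin n) R :=
  Matrix.of fun i j =>
    if (i : ℕ) = (j : ℕ) then if (i : ℕ) = 0 then κ else δ
    else if (i : ℕ) + 1 = (j : ℕ) ∨ (j : ℕ) + 1 = (i : ℕ) then 1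
    else 0

theorem blobGram_submatrix_one_succAbove (κ δ : R) (n : ℕ) :
    (blobGram κ δ (n + 2)).submatrix (Fin.succAbove 1) (Fin.succAbove 1) =
      cornerTridiagonal κ δ (n + 1) := by
  ext i j
  cases i using Fin.cases <;> cases j using Fin.cases <;>
    simp [blobGram, cornerTridiagonal]

theorem det_blobGram (κ δ : R) (n : ℕ) :
    (blobGram κ δ (n + 2)).det = (δ - κ) * (cornerTridiagonal κ δ (n + 1)).det := by
  rw [det_eq_sub_mul_det_submatrix_of_rows_eq _ (one_ne_zero : (1 : Fin (n + 2)) ≠ 0),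
    blobGram_submatrix_one_succAbove]
  · simp [blobGram]
  · intro j hj
    have hj' : (j : ℕ) ≠ 1 := by simpa [Fin.ext_iff] using hj
    simp only [blobGram, Matrix.of_apply, Fin.val_zero, Fin.val_one]
    grind

theorem det_cornerTridiagonal_add_two (κ δ : R) (n : ℕ) :
    (cornerTridiagonal κ δ (n + 2)).det =
      δ * (cornerTridiagonal κ δ (n + 1)).det - (cornerTridiagonal κ δ n).det := by
  have hone : cornerTridiagonal κ δ (n + 1) =
      (cornerTridiagonal κ δ (n + 2)).submatrix Fin.castSucc Fin.castSucc := rfl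
  have htwo : cornerTridiagonal κ δ n =
      (cornerTridiagonal κ δ (n + 2)).submatrix (Fin.castSucc ∘ Fin.castSucc)
        (Fin.castSucc ∘ Fin.castSucc) := rfl
  rw [det_eq_of_last_row_col_eq_zero, ← hone, ← htwo]
  · simp [cornerTridiagonal]
  all_goals
    intro i
    simp only [cornerTridiagonal, Matrix.of_apply, Fin.val_castSucc, Fin.val_last]
    grind

theorem mul_det_cornerTridiagonal_of_recurrence {κ δ : R} {s : ℕ → R} (hκ : s 0 * κ = s 1)
    (hs : ∀ n, s (n + 2) = δ * s (n + 1) - s n) (n : ℕ) :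
    s 0 * (cornerTridiagonal κ δ n).det = s n := by
  induction n using Nat.twoStepInduction with
  | zero => rw [Matrix.det_isEmpty, mul_one]
  | one => simpa [cornerTridiagonal] using hκ
  | more n ih ih' =>
    rw [det_cornerTridiagonal_add_two, hs, ← ih, ← ih']
    ring

end GramMatrix

section QuantumBracket

variable {K : Type*} [Field K] {q : K}

theorem qbr_sub_one (hq : q ≠ 0) (Q : K) (m : ℤ) :
    qbr q Q (m - 1) = (q + q⁻¹) * qbr q Q m - qbr q Q (m + 1) := by
  simp only [qbr, zpow_neg, zpow_sub_one₀ hq, zpow_add_one₀ hq, mul_inv, inv_inv]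
  ring

theorem sub_qbr_zero_div_qbr_one (hq : q ≠ 0) {Q : K} (hw : qbr q Q 1 ≠ 0) :
    q + q⁻¹ - qbr q Q 0 / qbr q Q 1 = qbr q Q 2 / qbr q Q 1 := by
  have hrec : qbr q Q 0 = (q + q⁻¹) * qbr q Q 1 - qbr q Q 2 := qbr_sub_one hq Q 1
  rw [hrec]
  field_simp
  ring

theorem det_cornerTridiagonal_qbr (hq : q ≠ 0) {Q : K} (hw : qbr q Q 1 ≠ 0) (n : ℕ) :
    (cornerTridiagonal (qbr q Q 0 / qbr q Q 1) (q + q⁻¹) n).det =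
      qbr q Q (1 - n) / qbr q Q 1 := by
  have hcorner : qbr q Q (1 - (0 : ℕ)) * (qbr q Q 0 / qbr q Q 1) = qbr q Q (1 - (1 : ℕ)) := by
    simpa using mul_div_cancel₀ (qbr q Q 0) hw
  have hrec (k : ℕ) : qbr q Q (1 - (k + 2 : ℕ)) =
      (q + q⁻¹) * qbr q Q (1 - (k + 1 : ℕ)) - qbr q Q (1 - k) := by
    have hpred : (1 - (k + 2 : ℕ) : ℤ) = 1 - (k + 1 : ℕ) - 1 := by lia
    have hsucc : (1 - k : ℤ) = 1 - (k + 1 : ℕ) + 1 := by lia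
    rw [hpred, hsucc, qbr_sub_one hq]
  rw [eq_div_iff hw, mul_comm]
  simpa using mul_det_cornerTridiagonal_of_recurrence (s := fun k => qbr q Q (1 - k)) hcorner hrec n

end QuantumBracket

/-- Let `κ = [w]/[w+1]`, `δ = q + q⁻¹`, and for `n ≥ 3` let `M` be the `n×n` matrix with
`M₀₀ = M₀₁ = M₁₀ = κ`, `M₀₂ = M₂₀ = 1`, `M₁₂ = M₂₁ = 1`, diagonal entries `δ` for
`1 ≤ i ≤ n-1`, entries `1` at `(i,i+1)` and `(i+1,i)` for `2 ≤ i ≤ n-2`, and `0` elsewhere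
(the Gram matrix `M^b_n(-(n-2))` of the blob algebra cell module `W_{-(n-2)}(n)`).
Then `det M = [w+2]·[w+2-n]/[w+1]²`. -/
theorem blob_gram_det_minus {K : Type*} [Field K] (q : K) (hq : q ≠ 0) (hq2 : q ^ 2 ≠ 1)
    (Q : K) (hQ : Q ≠ 0) (hw1 : qbr q Q 1 ≠ 0)
    (κ δ : K) (hκ : κ = qbr q Q 0 / qbr q Q 1) (hδ : δ = q + q⁻¹)
    (n : ℕ) (hn : 3 ≤ n)
    (M : Matrix (Fin n) (Fin n) K)
    (hM : ∀ i j : Fin n, M i j =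
      if ((i : ℕ) = 0 ∧ (j : ℕ) = 0) ∨ ((i : ℕ) = 0 ∧ (j : ℕ) = 1) ∨
          ((i : ℕ) = 1 ∧ (j : ℕ) = 0) then κ
      else if ((i : ℕ) = 0 ∧ (j : ℕ) = 2) ∨ ((i : ℕ) = 2 ∧ (j : ℕ) = 0) then 1
      else if (i : ℕ) = (j : ℕ) then δ
      else if (i : ℕ) + 1 = (j : ℕ) ∨ (j : ℕ) + 1 = (i : ℕ) then 1
      else 0) :
    M.det = qbr q Q 2 * qbr q Q (2 - n) / (qbr q Q 1) ^ 2 := by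
  obtain ⟨m, rfl⟩ : ∃ m, n = m + 2 := ⟨n - 2, by lia⟩
  have hgram : M = blobGram κ δ (m + 2) := Matrix.ext hM
  have hindex : (1 - (m + 1 : ℕ) : ℤ) = 2 - (m + 2 : ℕ) := by lia
  rw [hgram, det_blobGram, hκ, hδ, sub_qbr_zero_div_qbr_one hq hw1,
    det_cornerTridiagonal_qbr hq hw1, hindex, div_mul_div_comm, sq]
end

section
/- Let Q₁ be a nonzero element of K with [w₁+1] ≠ 0, set κ_L = [w₁]/[w₁+1] and δ = q + q^{−1}, and let κ_R be an arbitrary element of K. For n ≥ 3 let M′ be the (n+1)×(n+1) matrix over K, with rows and columns indexed by 0,…,n, defined by: M′₀₀ = M′₀₁ = M′₁₀ = κ_L; M′₀₂ = M′₂₀ = 1; M′_{ii} = δ for 1 ≤ i ≤ n−1; M′_{i,i+1} = M′_{i+1,i} = 1 for 1 ≤ i ≤ n−2; M′_{n−1,n} = M′_{n,n−1} = M′_{nn} = κ_R; and all other entries 0. Then det M′ = κ_R · ([w₁+2]/[w₁+1]²) · ([w₁+2−n] − κ_R·[w₁+3−n]). -/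
/-!
Rows `0` and `1` of `M'` differ only in column `1`, so subtracting row `1` from row `0` and
expanding along the result gives `det M' = (δ - κ_L) · det T`, where `T` is tridiagonal with
diagonal `κ_L, δ, …, δ, κ_R`. Before the last step, which alone involves `κ_R`, the leading minors
of `T` obey `D (m + 2) = δ D (m + 1) - D m`. So do the brackets, whence `D m = [w₁+1-m]/[w₁+1]`.
-/

section Determinants

variable {R : Type*} [CommRing R]

theorem det_eq_mul_det_of_row_eq_zero {m : ℕ} (A : Matrix (Fin (m + 1)) (Fin (m + 1)) R)
    (i j : Fin (m + 1)) (h : ∀ k, k ≠ j → A i k = 0) :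
    A.det = (-1) ^ (i + j : ℕ) * A i j * (A.submatrix i.succAbove j.succAbove).det := by
  rw [A.det_succ_row i, Finset.sum_eq_single j (fun k _ hk => by rw [h k hk]; ring) (by simp)]

theorem det_eq_mul_det_of_col_eq_zero {m : ℕ} (A : Matrix (Fin (m + 1)) (Fin (m + 1)) R)
    (i j : Fin (m + 1)) (h : ∀ k, k ≠ i → A k j = 0) :
    A.det = (-1) ^ (i + j : ℕ) * A i j * (A.submatrix i.succAbove j.succAbove).det := by
  rw [A.det_succ_column j, Finset.sum_eq_single i (fun k _ hk => by rw [h k hk]; ring) (by simp)]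

theorem det_eq_sub_mul_det_of_row_zero_eq_row_one {m : ℕ}
    (A : Matrix (Fin (m + 2)) (Fin (m + 2)) R) (h : ∀ j, j ≠ 1 → A 0 j = A 1 j) :
    A.det = (A 1 1 - A 0 1) * (A.submatrix Fin.succ (Fin.succAbove 1)).det := by
  have row_sub : (A.updateRow 0 (A 0 + (-1 : R) • A 1)).det = A.det :=
    A.det_updateRow_add_smul_self zero_ne_one (-1)
  have minor : (A.updateRow 0 (A 0 + (-1 : R) • A 1)).submatrix Fin.succ (Fin.succAbove 1) =
      A.submatrix Fin.succ (Fin.succAbove 1) := by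
    ext i j
    simp
  rw [← row_sub, det_eq_mul_det_of_row_eq_zero _ 0 1 (fun j hj => by simp [h j hj]),
    Fin.succAbove_zero, minor]
  simp [← sub_eq_add_neg]

/-- The `m × m` tridiagonal matrix with diagonal `a 0, a 1, …`, subdiagonal `b 0, b 1, …` and
superdiagonal `c 0, c 1, …`. The coefficients are sequences on `ℕ`, so that the leading principal
submatrices of such a matrix are the matrices of smaller size with the same coefficients. -/
def tridiagonal (a b c : ℕ → R) (m : ℕ) : Matrix (Fin m) (Fin m) R :=
  .of fun i j =>
    if (i : ℕ) = j then a i else if (i : ℕ) = j + 1 then b j else if (i : ℕ) + 1 = j then c i else 0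

theorem det_tridiagonal_submatrix_succAbove (a b c : ℕ → R) (m : ℕ) :
    ((tridiagonal a b c (m + 2)).submatrix Fin.castSucc (Fin.last m).castSucc.succAbove).det =
      c m * (tridiagonal a b c m).det := by
  set B := (tridiagonal a b c (m + 2)).submatrix Fin.castSucc (Fin.last m).castSucc.succAbove
    with hB
  have last_col (i : Fin (m + 1)) : B i (Fin.last m) = if i = Fin.last m then c m else 0 := by
    simp only [hB, tridiagonal, Matrix.submatrix_apply, Matrix.of_apply,
      Fin.succAbove_castSucc_self, Fin.succ_last, Fin.val_castSucc, Fin.val_last, Fin.ext_iff]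
    grind
  have minor : B.submatrix Fin.castSucc Fin.castSucc = tridiagonal a b c m := by
    ext i j
    have : (Fin.last m).castSucc.succAbove j.castSucc = j.castSucc.castSucc :=
      Fin.succAbove_of_castSucc_lt _ _ (by simp [Fin.lt_def])
    simp [hB, this, tridiagonal]
  rw [det_eq_mul_det_of_col_eq_zero B (Fin.last m) (Fin.last m)
    (fun i hi => by rw [last_col, if_neg hi]), last_col, if_pos rfl, Fin.succAbove_last, minor,
    Even.neg_one_pow ⟨_, rfl⟩, one_mul]

theorem det_tridiagonal_add_two (a b c : ℕ → R) (m : ℕ) :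
    (tridiagonal a b c (m + 2)).det =
      a (m + 1) * (tridiagonal a b c (m + 1)).det - b m * c m * (tridiagonal a b c m).det := by
  set T := tridiagonal a b c (m + 2) with hT
  have det_minor : (T.submatrix Fin.castSucc (Fin.last m).castSucc.succAbove).det =
      c m * (tridiagonal a b c m).det := det_tridiagonal_submatrix_succAbove a b c m
  have last_row (j : Fin m) : T (Fin.last (m + 1)) j.castSucc.castSucc = 0 := by
    simp only [hT, tridiagonal, Matrix.of_apply, Fin.val_castSucc, Fin.val_last]
    grind
  have sub_entry : T (Fin.last (m + 1)) (Fin.last m).castSucc = b m := by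
    simp [hT, tridiagonal]
  have diag_entry : T (Fin.last (m + 1)) (Fin.last (m + 1)) = a (m + 1) := by
    simp [hT, tridiagonal]
  have leading : T.submatrix Fin.castSucc Fin.castSucc = tridiagonal a b c (m + 1) := rfl
  rw [T.det_succ_row (Fin.last (m + 1)), Fin.sum_univ_castSucc, Fin.sum_univ_castSucc]
  simp only [last_row, sub_entry, diag_entry, Fin.succAbove_last, leading, det_minor,
    mul_zero, zero_mul, Finset.sum_const_zero, zero_add, Fin.val_castSucc, Fin.val_last,
    Odd.neg_one_pow (⟨m, by ring⟩ : Odd (m + 1 + m)),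
    Even.neg_one_pow (⟨m + 1, rfl⟩ : Even (m + 1 + (m + 1)))]
  ring

end Determinants

section Brackets

variable {K : Type*} [Field K] {q : K} (Q : K)

theorem qbr_add_one_add_qbr_sub_one (hq : q ≠ 0) (m : ℤ) :
    qbr q Q (m + 1) + qbr q Q (m - 1) = (q + q⁻¹) * qbr q Q m := by
  simp only [qbr, zpow_add₀ hq, zpow_sub₀ hq, neg_add, neg_sub, zpow_neg, zpow_one]
  field_simp
  ring

theorem qbr_add_one_div_qbr (hq : q ≠ 0) {m : ℤ} (hm : qbr q Q m ≠ 0) :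
    qbr q Q (m + 1) / qbr q Q m = q + q⁻¹ - qbr q Q (m - 1) / qbr q Q m := by
  rw [eq_sub_iff_add_eq, ← add_div, qbr_add_one_add_qbr_sub_one Q hq, mul_div_cancel_right₀ _ hm]

theorem det_tridiagonal_eq_qbr_div_qbr (hq : q ≠ 0) {k : ℤ} (hk : qbr q Q k ≠ 0)
    {a b c : ℕ → K} {N : ℕ} (ha₀ : a 0 = qbr q Q (k - 1) / qbr q Q k)
    (ha : ∀ i, i + 1 < N → a (i + 1) = q + q⁻¹) (hbc : ∀ i, i + 1 < N → b i * c i = 1) :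
    ∀ m ≤ N, (tridiagonal a b c m).det = qbr q Q (k - m) / qbr q Q k
  | 0, _ => by simp [hk]
  | 1, _ => by simp [tridiagonal, ha₀]
  | m + 2, hm => by
    have bracket_rec := qbr_add_one_add_qbr_sub_one Q hq (k - m - 1)
    rw [sub_add_cancel] at bracket_rec
    rw [det_tridiagonal_add_two, ha m hm, hbc m hm,
      det_tridiagonal_eq_qbr_div_qbr hq hk ha₀ ha hbc (m + 1) (by lia),
      det_tridiagonal_eq_qbr_div_qbr hq hk ha₀ ha hbc m (by lia),
      Nat.cast_succ, show k - (m + 2 : ℕ) = k - m - 1 - 1 by push_cast; ring, ← sub_sub]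
    linear_combination -bracket_rec / qbr q Q k

theorem det_tridiagonal_add_two_eq_qbr (hq : q ≠ 0) {k : ℤ} (hk : qbr q Q k ≠ 0)
    {a b c : ℕ → K} {m : ℕ} (ha₀ : a 0 = qbr q Q (k - 1) / qbr q Q k)
    (ha : ∀ i < m, a (i + 1) = q + q⁻¹) (hbc : ∀ i < m, b i * c i = 1) :
    (tridiagonal a b c (m + 2)).det =
      (a (m + 1) * qbr q Q (k - (m + 1)) - b m * c m * qbr q Q (k - m)) / qbr q Q k := by
  have leading_minor := det_tridiagonal_eq_qbr_div_qbr (N := m + 1) Q hq hk ha₀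
    (fun i hi => ha i (by lia)) (fun i hi => hbc i (by lia))
  rw [det_tridiagonal_add_two, leading_minor (m + 1) le_rfl, leading_minor m (by lia),
    Nat.cast_succ, mul_div_assoc', mul_div_assoc', ← sub_div]

end Brackets

/-- Let `κ_L = [w₁]/[w₁+1]`, `δ = q + q⁻¹`, `κ_R ∈ K` arbitrary, and for `n ≥ 3` let `M′` be
the `(n+1)×(n+1)` matrix with `M′₀₀ = M′₀₁ = M′₁₀ = κ_L`, `M′₀₂ = M′₂₀ = 1`, diagonal
entries `δ` for `1 ≤ i ≤ n-1`, entries `1` at `(i,i+1)`, `(i+1,i)` for `1 ≤ i ≤ n-2`,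
`M′_{n-1,n} = M′_{n,n-1} = M′_{nn} = κ_R`, and `0` elsewhere. Then
`det M′ = κ_R·([w₁+2]/[w₁+1]²)·([w₁+2-n] - κ_R·[w₁+3-n])`. -/
theorem symplectic_blob_gram_det_laplace {K : Type*} [Field K] (q : K) (hq : q ≠ 0)
    (hq2 : q ^ 2 ≠ 1)
    (Q₁ : K) (hQ₁ : Q₁ ≠ 0) (hw1 : qbr q Q₁ 1 ≠ 0)
    (κL κR δ : K) (hκL : κL = qbr q Q₁ 0 / qbr q Q₁ 1) (hδ : δ = q + q⁻¹)
    (n : ℕ) (hn : 3 ≤ n)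
    (M' : Matrix (Fin (n + 1)) (Fin (n + 1)) K)
    (hM' : ∀ i j : Fin (n + 1), M' i j =
      if ((i : ℕ) = 0 ∧ (j : ℕ) = 0) ∨ ((i : ℕ) = 0 ∧ (j : ℕ) = 1) ∨
          ((i : ℕ) = 1 ∧ (j : ℕ) = 0) then κL
      else if ((i : ℕ) = 0 ∧ (j : ℕ) = 2) ∨ ((i : ℕ) = 2 ∧ (j : ℕ) = 0) then 1
      else if ((i : ℕ) = n - 1 ∧ (j : ℕ) = n) ∨ ((i : ℕ) = n ∧ (j : ℕ) = n - 1) ∨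
          ((i : ℕ) = n ∧ (j : ℕ) = n) then κR
      else if (i : ℕ) = (j : ℕ) then δ
      else if (i : ℕ) + 1 = (j : ℕ) ∨ (j : ℕ) + 1 = (i : ℕ) then 1
      else 0) :
    M'.det = κR * (qbr q Q₁ 2 / (qbr q Q₁ 1) ^ 2) *
      (qbr q Q₁ (2 - n) - κR * qbr q Q₁ (3 - n)) := by
  obtain ⟨m, rfl⟩ : ∃ m, n = m + 2 := ⟨n - 2, by lia⟩
  let a : ℕ → K := fun i => if i = 0 then κL else if i = m + 1 then κR else δ
  let b : ℕ → K := fun i => if i = m then κR else 1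
  have rows_agree (j : Fin (m + 3)) (hj : j ≠ 1) : M' 0 j = M' 1 j := by
    have : (j : ℕ) ≠ 1 := fun h => hj (Fin.ext h)
    simp only [hM', Fin.val_zero, Fin.val_one]
    grind
  have column_gap : M' 1 1 - M' 0 1 = qbr q Q₁ 2 / qbr q Q₁ 1 := by
    have : M' 1 1 = δ := by simp [hM']
    simpa [this, hM', hδ, hκL] using (qbr_add_one_div_qbr Q₁ hq hw1).symm
  have minor : M'.submatrix Fin.succ (Fin.succAbove 1) = tridiagonal a b b (m + 2) := by
    ext i j
    simp only [tridiagonal, hM', Matrix.submatrix_apply, Matrix.of_apply, Fin.succAbove,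
      Fin.lt_def, apply_ite Fin.val, Fin.val_succ, Fin.val_castSucc, Fin.val_one]
    grind
  have det_T := det_tridiagonal_add_two_eq_qbr (a := a) (b := b) (c := b) (m := m) Q₁ hq hw1
    (by simp [a, hκL]) (by grind) (by grind)
  rw [det_eq_sub_mul_det_of_row_zero_eq_row_one M' rows_agree, column_gap, minor, det_T,
    show a (m + 1) = κR by simp [a], show b m = κR by simp [b], Nat.cast_add, Nat.cast_two,
    show (2 - (m + 2) : ℤ) = 1 - (m + 1) by ring, show (3 - (m + 2) : ℤ) = 1 - m by ring]
  ring
end
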